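/- Second-order expansion of the spectral inf-entropy: for a density operator ρ on a separable Hilbert space with finite entropy H(ρ), finite entropy variance V(ρ) > 0, and finite third absolute central moment of −log p_Z(Z), one has H̲_s^ε(ρ^{⊗n}) = n H(ρ) + √(n V(ρ)) Φ^{−1}(ε) + O(1) as n → ∞, for fixed ε ∈ (0,1). -/

import Mathlib

/-!
The eigenvalues of `ρ^{⊗n}` are products of eigenvalues of `ρ`, so the trace `Tr[ρ^{⊗n} Π_ζ]` is
the probability that a sum of `n` independent copies of `-log₂ p(Z)` is at least `ζ`
(`tsum_trace_eq`, `map_sum_pi_eq_convPow`). The spectral inf-entropy is therefore the `ε`-quantile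
of that sum, and a Berry–Esseen bound turns into the expansion of the quantile
(`quantile_expansion`), because the normal density is bounded below near `Φ⁻¹(ε)`. The finitely
many `n` for which the Berry–Esseen error is too large are absorbed into the constant.

The Berry–Esseen theorem (`berry_esseen`) is proved by Lindeberg's replacement method with
Gaussian smoothing. If `μ` is centred with unit variance and finite third absolute moment, then
`μ ∗ N(0, v)` and `N(0, 1) ∗ N(0, v)` differ by `O(v^{-3/2})` in total variation (`smoothing_tv`).
Let `δ k` be the uniform distance between the distribution functions of the `k`-fold convolution
power of `μ` and of `N(0, k)`. Replacing the summands one at a time in the `n`-fold power smoothed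
by `N(0, L)` costs `K * (δ k / (L + n - 1 - k)^{3/2} + 1 / (n - 1 + L)^{3/2})` at the step that
leaves `k` summands (`lindeberg_sum`). If `δ k ≤ C / √(k + 1)` for `k < n`, these costs add up to
`K * (1 + 10 * C / √L) / √n` (`sum_split_le`), and removing the smoothing costs a further multiple
of `√L / √n` (`unsmoothing`). For `L` large compared with `K ^ 2` the induction on `n` closes.
-/


/-- Standard normal cumulative distribution function. -/
noncomputable def stdNormalCDF (x : ℝ) : ℝ :=
  (Real.sqrt (2 * Real.pi))⁻¹ * ∫ y in Set.Iic x, Real.exp (-y ^ 2 / 2)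

/-- Inverse of the standard normal CDF. -/
noncomputable def stdNormalCDFInv (ε : ℝ) : ℝ :=
  sSup {a : ℝ | stdNormalCDF a ≤ ε}

section Auxiliary

open MeasureTheory ProbabilityTheory Set Filter
open scoped NNReal ENNReal Topology

/-! ### Gaussian smoothing and matching moments -/

lemma abs_integral_le_of_le {m : Measure ℝ} {f h : ℝ → ℝ} (hi : Integrable h m)
    (hfh : ∀ x, |f x| ≤ h x) : |∫ x, f x ∂m| ≤ ∫ x, h x ∂m :=
  norm_integral_le_of_norm_le (f := f) hi (ae_of_all _ hfh)

/-- Cameron–Martin: translating the standard Gaussian by `x` multiplies its density by the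
likelihood ratio `exp (x * u - x ^ 2 / 2)`. -/
lemma integral_shift_gaussian (g : ℝ → ℝ) (x : ℝ) :
    ∫ u, g (x + u) ∂(gaussianReal 0 1)
      = ∫ u, g u * Real.exp (x * u - x ^ 2 / 2) ∂(gaussianReal 0 1) := by
  rw [integral_gaussianReal_eq_integral_smul one_ne_zero,
    integral_gaussianReal_eq_integral_smul one_ne_zero,
    ← integral_sub_right_eq_self _ x]
  refine integral_congr_ae (ae_of_all _ fun u => ?_)
  simp only [gaussianPDFReal, smul_eq_mul, NNReal.coe_one, mul_one, sub_zero,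
    add_sub_cancel]
  rw [show -(u - x) ^ 2 / 2 = -u ^ 2 / 2 + (x * u - x ^ 2 / 2) by ring, Real.exp_add]
  ring

lemma abs_exp_taylor_two (a : ℝ) :
    |Real.exp a - (1 + a + a ^ 2 / 2)| ≤ |a| ^ 3 * Real.exp |a| := by
  have h := Complex.norm_exp_sub_sum_le_norm_mul_exp (a : ℂ) 3
  have e : Complex.exp (a : ℂ) - ∑ m ∈ Finset.range 3, (a : ℂ) ^ m / (m.factorial : ℂ)
      = ((Real.exp a - (1 + a + a ^ 2 / 2) : ℝ) : ℂ) := by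
    simp [Finset.sum_range_succ, Nat.factorial]
  rw [e, Complex.norm_real, Complex.norm_real] at h
  exact h

/-- Second-order Taylor expansion in `x` of the Gaussian likelihood ratio. The coefficients are the
Hermite polynomials in `u`, and the remainder is cubic in `x` for *all* `x`, with a factor that is
Gaussian-integrable in `u` uniformly in `x`. For `|x| ≤ 1` this is Taylor's formula; for `|x| ≥ 1`
each of the terms is separately dominated by `|x| ^ 3`. -/
lemma likelihood_ratio_taylor (x u : ℝ) :
    |Real.exp (x * u - x ^ 2 / 2) - (1 + x * u + x ^ 2 * ((u ^ 2 - 1) / 2))|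
      ≤ |x| ^ 3 * (Real.exp (x * u - x ^ 2 / 2) + 10 * Real.exp (2 * |u| + 1)) := by
  set t := |u| + 1 / 2 with ht
  have ht0 : 1 / 2 ≤ t := by have := abs_nonneg u; linarith
  have hE : Real.exp (2 * |u| + 1) = Real.exp t * Real.exp t := by
    rw [← Real.exp_add]; congr 1; rw [ht]; ring
  have e1 : 1 + t ≤ Real.exp t := by have := Real.add_one_le_exp t; linarith
  have e2 : t ^ 2 / 2 ≤ Real.exp t := by
    have := Real.pow_div_factorial_le_exp (n := 2) t (by linarith); simpa [Nat.factorial] using this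
  have e3 : t ^ 3 / 6 ≤ Real.exp t := by
    have := Real.pow_div_factorial_le_exp (n := 3) t (by linarith); simpa [Nat.factorial] using this
  have hE1 : Real.exp t ≤ Real.exp t * Real.exp t := by nlinarith
  have hu : |u| = t - 1 / 2 := by rw [ht]; ring
  have hu2 : u ^ 2 = (t - 1 / 2) ^ 2 := by rw [← hu, sq_abs]
  have hpos := Real.exp_pos (x * u - x ^ 2 / 2)
  have hx0 := abs_nonneg x
  have hxu : |x * u| = |x| * (t - 1 / 2) := by rw [abs_mul, hu]
  have hx2 : x ^ 2 = |x| ^ 2 := (sq_abs x).symm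
  rw [hE]
  rcases le_total |x| 1 with hx | hx
  · set a := x * u - x ^ 2 / 2 with ha
    have hat : |a| ≤ |x| * t := by
      rw [ha]
      refine (abs_sub _ _).trans ?_
      rw [hxu, abs_of_nonneg (by positivity : 0 ≤ x ^ 2 / 2), hx2]
      nlinarith
    have hat' : |a| ≤ t := hat.trans (by nlinarith)
    have h1 : |a| ^ 3 * Real.exp |a| ≤ |x| ^ 3 * (6 * (Real.exp t * Real.exp t)) := by
      calc |a| ^ 3 * Real.exp |a| ≤ (|x| * t) ^ 3 * Real.exp t := by gcongr
        _ = |x| ^ 3 * (t ^ 3 * Real.exp t) := by ring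
        _ ≤ |x| ^ 3 * (6 * Real.exp t * Real.exp t) := by gcongr; linarith
        _ = _ := by ring
    have h2 : |-(x ^ 3 * u / 2) + x ^ 4 / 8| ≤ |x| ^ 3 * (Real.exp t * Real.exp t) := by
      refine (abs_add_le _ _).trans ?_
      rw [abs_neg, abs_div, abs_mul, abs_div, abs_pow, abs_pow, hu]
      norm_num
      have : |x| ^ 4 ≤ |x| ^ 3 := pow_le_pow_of_le_one hx0 hx (by norm_num)
      have h3 : 0 ≤ |x| ^ 3 := by positivity
      have : |x| ^ 3 * t ≤ |x| ^ 3 * (Real.exp t * Real.exp t) := by gcongr; linarith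
      nlinarith
    have := abs_exp_taylor_two a
    have e : Real.exp a - (1 + x * u + x ^ 2 * ((u ^ 2 - 1) / 2))
        = (Real.exp a - (1 + a + a ^ 2 / 2)) + (-(x ^ 3 * u / 2) + x ^ 4 / 8) := by
      rw [ha]; ring
    rw [e]
    refine (abs_add_le _ _).trans ?_
    have h3 : 0 ≤ |x| ^ 3 * Real.exp a := by positivity
    have h4 : 0 ≤ |x| ^ 3 * (Real.exp t * Real.exp t) := by positivity
    nlinarith
  · have b1 : 1 ≤ |x| ^ 3 := one_le_pow₀ hx
    have b2 : |x| ≤ |x| ^ 3 := le_self_pow₀ hx (by norm_num)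
    have b3 : |x| ^ 2 ≤ |x| ^ 3 := pow_le_pow_right₀ hx (by norm_num)
    have h1 : |1 + x * u + x ^ 2 * ((u ^ 2 - 1) / 2)|
        ≤ |x| ^ 3 * (10 * (Real.exp t * Real.exp t)) := by
      have hc : |(u ^ 2 - 1) / 2| ≤ t ^ 2 / 2 + 1 / 2 := by
        rw [abs_le]; constructor <;> nlinarith [sq_nonneg u]
      calc |1 + x * u + x ^ 2 * ((u ^ 2 - 1) / 2)|
          ≤ |1 + x * u| + |x ^ 2 * ((u ^ 2 - 1) / 2)| := abs_add_le _ _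
        _ ≤ (|1| + |x * u|) + |x ^ 2 * ((u ^ 2 - 1) / 2)| := by gcongr; exact abs_add_le _ _
        _ = 1 + |x| * (t - 1 / 2) + |x| ^ 2 * |(u ^ 2 - 1) / 2| := by
            rw [hxu, abs_mul (x ^ 2), abs_pow]; norm_num
        _ ≤ |x| ^ 3 + |x| ^ 3 * t + |x| ^ 3 * (t ^ 2 / 2 + 1 / 2) := by
            gcongr; linarith
        _ = |x| ^ 3 * (3 / 2 + t + t ^ 2 / 2) := by ring
        _ ≤ _ := by gcongr; linarith
    refine (abs_sub _ _).trans ?_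
    rw [abs_of_pos hpos, mul_add]
    have h2 := mul_le_mul_of_nonneg_right b1 hpos.le
    rw [one_mul] at h2
    exact add_le_add h2 h1

lemma integrable_exp_abs_gaussian :
    Integrable (fun u : ℝ => 10 * Real.exp (2 * |u| + 1)) (gaussianReal 0 1) := by
  have h := ((integrable_exp_mul_gaussianReal (μ := 0) (v := 1) 2).add
    (integrable_exp_mul_gaussianReal (μ := 0) (v := 1) (-2))).const_mul (10 * Real.exp 1)
  refine h.mono' (by fun_prop) (ae_of_all _ fun u => ?_)
  rw [Real.norm_of_nonneg (by positivity), Real.exp_add]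
  simp only [Pi.add_apply]
  have : Real.exp (2 * |u|) ≤ Real.exp (2 * u) + Real.exp (-2 * u) := by
    rcases abs_choice u with h | h <;> rw [h]
    · linarith [Real.exp_pos (-2 * u)]
    · rw [show 2 * -u = -2 * u by ring]; linarith [Real.exp_pos (2 * u)]
  nlinarith [Real.exp_pos 1]

/-- The `L¹` norm, under the standard Gaussian, of the factor that multiplies `|x| ^ 3` in the
remainder of `likelihood_ratio_taylor`. The summand `1` is the mass of the likelihood ratio. -/
noncomputable def taylorConst : ℝ :=
  1 + ∫ u, 10 * Real.exp (2 * |u| + 1) ∂(gaussianReal 0 1)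

lemma taylorConst_pos : 0 < taylorConst := by
  unfold taylorConst
  have : 0 ≤ ∫ u, 10 * Real.exp (2 * |u| + 1) ∂(gaussianReal 0 1) :=
    integral_nonneg fun u => by positivity
  linarith

lemma integral_likelihood_ratio (x : ℝ) :
    ∫ u, Real.exp (x * u - x ^ 2 / 2) ∂(gaussianReal 0 1) = 1 := by
  have := integral_shift_gaussian (fun _ => 1) x
  simpa using this.symm

lemma integrable_likelihood_ratio (x : ℝ) :
    Integrable (fun u => Real.exp (x * u - x ^ 2 / 2)) (gaussianReal 0 1) := by
  have := (integrable_exp_mul_gaussianReal (μ := 0) (v := 1) x).mul_const (Real.exp (-(x ^ 2 / 2)))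
  refine this.congr (ae_of_all _ fun u => ?_)
  simp only [← Real.exp_add]; congr 1

/-- The Gaussian smoothing of a function bounded by `B` is quadratic up to an error
`B * taylorConst * |x| ^ 3`. No regularity of `g` is needed, because the derivatives fall on the
Gaussian density. -/
lemma gaussian_smoothing_taylor {g : ℝ → ℝ} (hg : Measurable g) {B : ℝ} (hB : ∀ u, |g u| ≤ B) :
    ∃ c₀ c₁ c₂ : ℝ, ∀ x, |∫ u, g (x + u) ∂(gaussianReal 0 1) - (c₀ + x * c₁ + x ^ 2 * c₂)|
      ≤ B * taylorConst * |x| ^ 3 := by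
  have hB0 : 0 ≤ B := (abs_nonneg _).trans (hB 0)
  have bdd : ∀ f : ℝ → ℝ, Integrable f (gaussianReal 0 1) →
      Integrable (fun u => g u * f u) (gaussianReal 0 1) := fun f hf =>
    hf.bdd_mul hg.aestronglyMeasurable (ae_of_all _ hB)
  have i0 : Integrable (fun _ : ℝ => (1 : ℝ)) (gaussianReal 0 1) := integrable_const _
  have i1 : Integrable (fun u : ℝ => u) (gaussianReal 0 1) :=
    (memLp_id_gaussianReal (μ := 0) (v := 1) 1).integrable (by simp)
  have i2 : Integrable (fun u : ℝ => (u ^ 2 - 1) / 2) (gaussianReal 0 1) :=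
    (((memLp_id_gaussianReal (μ := 0) (v := 1) 2).integrable_sq).sub i0).div_const 2
  refine ⟨∫ u, g u * 1 ∂(gaussianReal 0 1), ∫ u, g u * u ∂(gaussianReal 0 1),
    ∫ u, g u * ((u ^ 2 - 1) / 2) ∂(gaussianReal 0 1), fun x => ?_⟩
  have j0 := bdd _ i0
  have j1 := (bdd _ i1).const_mul x
  have j2 := (bdd _ i2).const_mul (x ^ 2)
  have j3 := bdd _ (integrable_likelihood_ratio x)
  have j01 : Integrable (fun u => g u * 1 + x * (g u * u)) (gaussianReal 0 1) := j0.add j1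
  have j012 : Integrable (fun u => g u * 1 + x * (g u * u) + x ^ 2 * (g u * ((u ^ 2 - 1) / 2)))
    (gaussianReal 0 1) := j01.add j2
  rw [integral_shift_gaussian, ← integral_const_mul, ← integral_const_mul,
    ← integral_add j0 j1, ← integral_add j01 j2, ← integral_sub j3 j012]
  have hi : Integrable (fun u => B * (|x| ^ 3 * (Real.exp (x * u - x ^ 2 / 2)
      + 10 * Real.exp (2 * |u| + 1)))) (gaussianReal 0 1) :=
    (((integrable_likelihood_ratio x).add integrable_exp_abs_gaussian).const_mul _).const_mul _
  refine (abs_integral_le_of_le hi fun u => ?_).trans (le_of_eq ?_)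
  · have e : g u * Real.exp (x * u - x ^ 2 / 2) - (g u * 1 + x * (g u * u)
        + x ^ 2 * (g u * ((u ^ 2 - 1) / 2)))
        = g u * (Real.exp (x * u - x ^ 2 / 2) - (1 + x * u + x ^ 2 * ((u ^ 2 - 1) / 2))) := by
      ring
    rw [e, abs_mul]
    exact mul_le_mul (hB u) (likelihood_ratio_taylor x u) (abs_nonneg _) hB0
  · rw [integral_const_mul, integral_const_mul, integral_add (integrable_likelihood_ratio x)
      integrable_exp_abs_gaussian, integral_likelihood_ratio, taylorConst]
    ring

/-- A centred probability law on `ℝ` with unit variance whose third absolute moment is finite and at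
most `β`. Integrability is recorded, so that the moments are not junk values. -/
structure MomentData (μ : Measure ℝ) (β : ℝ) : Prop where
  prob : IsProbabilityMeasure μ
  int1 : Integrable (fun x : ℝ => x) μ
  int2 : Integrable (fun x : ℝ => x ^ 2) μ
  int3 : Integrable (fun x : ℝ => |x| ^ 3) μ
  mean : ∫ x, x ∂μ = 0
  second : ∫ x, x ^ 2 ∂μ = 1
  third : ∫ x, |x| ^ 3 ∂μ ≤ β

lemma gaussian_moments : MomentData (gaussianReal 0 1) (∫ x, |x| ^ 3 ∂(gaussianReal 0 1)) where
  prob := inferInstance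
  int1 := (memLp_id_gaussianReal (μ := 0) (v := 1) 1).integrable (by simp)
  int2 := (memLp_id_gaussianReal (μ := 0) (v := 1) 2).integrable_sq
  int3 := (memLp_id_gaussianReal (μ := 0) (v := 1) 3).integrable_norm_pow (by norm_num)
  mean := by simp
  second := by
    have := variance_fun_id_gaussianReal (μ := 0) (v := 1)
    rw [variance_of_integral_eq_zero (by fun_prop) (by simp)] at this
    simpa using this
  third := le_rfl

/-- A function within `K * |x| ^ 3` of a quadratic has nearly the same integral against every centred
law of unit variance. -/
lemma smoothing_near_quadratic {μ : Measure ℝ} {β : ℝ} (hμ : MomentData μ β)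
    {T : ℝ → ℝ} (hT : Measurable T) {B K c₀ c₁ c₂ : ℝ} (hTB : ∀ x, |T x| ≤ B) (hK : 0 ≤ K)
    (h : ∀ x, |T x - (c₀ + x * c₁ + x ^ 2 * c₂)| ≤ K * |x| ^ 3) :
    |∫ x, T x ∂μ - (c₀ + c₂)| ≤ K * β := by
  have := hμ.prob
  have iT : Integrable T μ := (integrable_const B).mono' hT.aestronglyMeasurable (ae_of_all _ hTB)
  have i0 : Integrable (fun _ : ℝ => c₀) μ := integrable_const _
  have i1 := hμ.int1.mul_const c₁
  have i2 := hμ.int2.mul_const c₂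
  have i01 : Integrable (fun x => c₀ + x * c₁) μ := i0.add i1
  have i012 : Integrable (fun x => c₀ + x * c₁ + x ^ 2 * c₂) μ := i01.add i2
  have e : ∫ x, T x ∂μ - (c₀ + c₂) = ∫ x, (T x - (c₀ + x * c₁ + x ^ 2 * c₂)) ∂μ := by
    have e1 : ∫ x, (c₀ + x * c₁ + x ^ 2 * c₂) ∂μ = c₀ + c₂ := by
      rw [integral_add i01 i2, integral_add i0 i1, integral_mul_const, integral_mul_const,
        hμ.mean, hμ.second]
      simp
    rw [integral_sub iT i012, e1]
  rw [e]
  refine (abs_integral_le_of_le (hμ.int3.const_mul K) h).trans ?_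
  rw [integral_const_mul]
  exact mul_le_mul_of_nonneg_left hμ.third hK

lemma integrable_of_bdd {ν : Measure ℝ} [IsFiniteMeasure ν] {g : ℝ → ℝ} (hg : Measurable g)
    {B : ℝ} (hB : ∀ u, |g u| ≤ B) : Integrable g ν :=
  (integrable_const B).mono' hg.aestronglyMeasurable (ae_of_all _ hB)

/-- Two centred laws of unit variance become close in total variation once both are smoothed by a
Gaussian of variance `v`: their second-order Taylor terms agree and the third-order remainder
scales like `v ^ (-3 / 2)`. -/
lemma smoothing_tv {μ ν : Measure ℝ} {β β' : ℝ} (hμ : MomentData μ β) (hν : MomentData ν β')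
    (v : ℝ≥0) (hv : v ≠ 0) {g : ℝ → ℝ} (hg : Measurable g) {B : ℝ} (hB : ∀ u, |g u| ≤ B) :
    |∫ u, g u ∂(μ ∗ gaussianReal 0 v) - ∫ u, g u ∂(ν ∗ gaussianReal 0 v)|
      ≤ B * (taylorConst * (β + β') / √v ^ 3) := by
  have := hμ.prob
  have := hν.prob
  have hB0 : 0 ≤ B := (abs_nonneg _).trans (hB 0)
  set s : ℝ := √v with hs
  have hs0 : 0 < s := Real.sqrt_pos.2 (by positivity)
  have hmap : gaussianReal 0 v = (gaussianReal 0 1).map (fun u => s * u) := by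
    rw [gaussianReal_map_const_mul]
    congr 1
    · simp
    · ext; simp [hs, Real.sq_sqrt]
  obtain ⟨c₀, c₁, c₂, hc⟩ := gaussian_smoothing_taylor (g := fun u => g (s * u))
    (hg.comp (measurable_const_mul s)) (fun u => hB _)
  set T : ℝ → ℝ := fun x => ∫ u, g (x + u) ∂(gaussianReal 0 v) with hTdef
  have hTm : Measurable T :=
    (StronglyMeasurable.integral_prod_right (f := fun x u : ℝ => g (x + u))
      (hg.comp (measurable_fst.add measurable_snd)).stronglyMeasurable).measurable
  have hTB : ∀ x, |T x| ≤ B := fun x => by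
    have := abs_integral_le_of_le (m := gaussianReal 0 v) (integrable_const B)
      fun u => hB (x + u)
    simpa using this
  have hT : ∀ x, |T x - (c₀ + x * (c₁ / s) + x ^ 2 * (c₂ / s ^ 2))|
      ≤ (B * taylorConst / s ^ 3) * |x| ^ 3 := fun x => by
    have h := hc (x / s)
    have e : T x = ∫ u, g (s * (x / s + u)) ∂(gaussianReal 0 1) := by
      rw [hTdef]; simp only
      rw [hmap, integral_map (measurable_const_mul s).aemeasurable (f := fun u => g (x + u))
        (hg.comp (measurable_const_add x)).aestronglyMeasurable]
      refine integral_congr_ae (ae_of_all _ fun u => ?_)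
      simp only; congr 1; field_simp
    rw [← e] at h
    convert h using 1
    · congr 1; field_simp
    · rw [abs_div, abs_of_pos hs0]; field_simp
  have hK : 0 ≤ B * taylorConst / s ^ 3 := by have := taylorConst_pos; positivity
  have a1 := smoothing_near_quadratic hμ hTm hTB hK hT
  have a2 := smoothing_near_quadratic hν hTm hTB hK hT
  rw [integral_conv (integrable_of_bdd hg hB), integral_conv (integrable_of_bdd hg hB)]
  have := abs_sub_le (∫ x, T x ∂μ) (c₀ + c₂ / s ^ 2) (∫ x, T x ∂ν)
  rw [abs_sub_comm (c₀ + c₂ / s ^ 2)] at this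
  calc _ ≤ _ := this
    _ ≤ B * taylorConst / s ^ 3 * β + B * taylorConst / s ^ 3 * β' := add_le_add a1 a2
    _ = _ := by ring

/-! ### Sums of inverse square roots -/

lemma sum_inv_sqrt_le (n : ℕ) : ∑ j ∈ Finset.range n, 1 / √((j : ℝ) + 1) ≤ 2 * √n := by
  induction n with
  | zero => simp
  | succ n ih =>
    rw [Finset.sum_range_succ]
    push_cast
    have h0 : 0 ≤ √(n : ℝ) := Real.sqrt_nonneg _
    have h1 : 0 < √((n : ℝ) + 1) := Real.sqrt_pos.2 (by positivity)
    have s0 : √(n : ℝ) ^ 2 = n := Real.sq_sqrt (by positivity)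
    have s1 : √((n : ℝ) + 1) ^ 2 = n + 1 := Real.sq_sqrt (by positivity)
    have : 1 / √((n : ℝ) + 1) ≤ 2 * √((n : ℝ) + 1) - 2 * √n := by
      rw [div_le_iff₀ h1]
      nlinarith [sq_nonneg (√((n : ℝ) + 1) - √n)]
    linarith

lemma sum_inv_sqrt_cube_le (L : ℝ) (hL : 1 ≤ L) (n : ℕ) :
    ∑ j ∈ Finset.range n, 1 / √(L + j) ^ 3 ≤ 4 / √L := by
  suffices h : ∑ j ∈ Finset.range n, 1 / √(L + j) ^ 3 ≤ 4 / √L - 4 / √(L + n) by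
    have : 0 ≤ 4 / √(L + n) := by positivity
    linarith
  induction n with
  | zero => simp
  | succ n ih =>
    rw [Finset.sum_range_succ]
    have hx : 1 ≤ L + n := by have : (0 : ℝ) ≤ n := by positivity
                              linarith
    push_cast
    rw [← add_assoc]
    set x := L + n
    have ha : 1 ≤ √x := Real.one_le_sqrt.2 hx
    set a := √x
    have s0 : a ^ 2 = x := Real.sq_sqrt (by positivity)
    have s1 : √(x + 1) ^ 2 = x + 1 := Real.sq_sqrt (by positivity)
    have hb : a ≤ √(x + 1) := Real.sqrt_le_sqrt (by linarith)
    have hb2 : √(x + 1) ≤ 3 / 2 * a := by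
      apply Real.sqrt_le_iff.2 ⟨by positivity, by nlinarith⟩
    set b := √(x + 1)
    have hb0 : 0 < b := by linarith
    have ha0 : 0 < a := by linarith
    have : 1 / a ^ 3 ≤ 4 / a - 4 / b := by
      have e : 4 / a - 4 / b = 4 / (a * b * (a + b)) := by
        field_simp
        nlinarith
      rw [e, div_le_div_iff₀ (by positivity) (by positivity)]
      have : b * (a + b) ≤ 4 * a ^ 2 := by nlinarith
      nlinarith
    linarith

/-- The sum over `j` of these terms is split at `j = n / 2`: in the first half `n - j` is comparable
to `n`, in the second half `L + j` is. -/
lemma split_term (n j L : ℝ) (hj : 0 ≤ j) (hjn : j < n) (hL : 1 ≤ L) :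
    1 / √(n - j) / √(L + j) ^ 3 ≤ 3 / 2 / √n * (1 / √(L + j) ^ 3)
      + 2 / (n * √L) * (1 / √(n - j)) := by
  have hn : 0 < n := by linarith
  have hnj : 0 < √(n - j) := Real.sqrt_pos.2 (by linarith)
  have hLj : 0 < √(L + j) := Real.sqrt_pos.2 (by linarith)
  have hsL : 0 < √L := Real.sqrt_pos.2 (by linarith)
  have hsn : 0 < √n := Real.sqrt_pos.2 hn
  rcases le_total (2 * j) n with h | h
  · have : 1 / √(n - j) ≤ 3 / 2 / √n := by
      rw [div_le_div_iff₀ hnj hsn]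
      have : √n ≤ 3 / 2 * √(n - j) := by
        apply Real.sqrt_le_iff.2 ⟨by positivity, ?_⟩
        rw [mul_pow, Real.sq_sqrt (by linarith)]; linarith
      linarith
    have h2 : 0 ≤ 2 / (n * √L) * (1 / √(n - j)) := by positivity
    have h3 : 1 / √(n - j) / √(L + j) ^ 3 = 1 / √(n - j) * (1 / √(L + j) ^ 3) := by ring
    rw [h3]
    have := mul_le_mul_of_nonneg_right this (by positivity : 0 ≤ 1 / √(L + j) ^ 3)
    linarith
  · have : 1 / √(L + j) ^ 3 ≤ 2 / (n * √L) := by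
      rw [div_le_div_iff₀ (by positivity) (by positivity)]
      have s : √(L + j) ^ 2 = L + j := Real.sq_sqrt (by linarith)
      have h1 : √L ≤ √(L + j) := Real.sqrt_le_sqrt (by linarith)
      have e : √(L + j) ^ 3 = (L + j) * √(L + j) := by rw [pow_succ, s]
      rw [e]
      have : n * √L ≤ (2 * (L + j)) * √(L + j) := mul_le_mul (by linarith) h1 hsL.le (by linarith)
      linarith
    have h2 : 0 ≤ 3 / 2 / √n * (1 / √(L + j) ^ 3) := by positivity
    have h3 : 1 / √(n - j) / √(L + j) ^ 3 = 1 / √(L + j) ^ 3 * (1 / √(n - j)) := by ring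
    rw [h3]
    have := mul_le_mul_of_nonneg_right this (by positivity : 0 ≤ 1 / √(n - j))
    linarith

/-- The convolution sum produced by the Lindeberg induction. The gain `1 / √L` is what makes the
induction close when `L` is large. -/
lemma sum_split_le (n : ℕ) (hn : 1 ≤ n) (L : ℝ) (hL : 1 ≤ L) :
    ∑ j ∈ Finset.range n, 1 / √((n : ℝ) - j) / √(L + j) ^ 3 ≤ 10 / (√n * √L) := by
  have hn0 : (0 : ℝ) < n := by positivity
  have hsL : 0 < √L := Real.sqrt_pos.2 (by linarith)
  have hsn : 0 < √(n : ℝ) := Real.sqrt_pos.2 hn0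
  have h1 : ∑ j ∈ Finset.range n, 1 / √((n : ℝ) - j) ≤ 2 * √n := by
    refine le_trans (le_of_eq ?_) (sum_inv_sqrt_le n)
    rw [← Finset.sum_range_reflect]
    refine Finset.sum_congr rfl fun j hj => ?_
    have : j < n := Finset.mem_range.1 hj
    rw [Nat.sub_sub, Nat.cast_sub (by omega)]
    push_cast
    congr 2; ring
  calc _ ≤ ∑ j ∈ Finset.range n, (3 / 2 / √(n : ℝ) * (1 / √(L + j) ^ 3)
      + 2 / (n * √L) * (1 / √((n : ℝ) - j))) := Finset.sum_le_sum fun j hj =>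
        split_term n j L (by positivity) (by exact_mod_cast Finset.mem_range.1 hj) hL
    _ ≤ 3 / 2 / √(n : ℝ) * (4 / √L) + 2 / (n * √L) * (2 * √n) := by
      rw [Finset.sum_add_distrib, ← Finset.mul_sum, ← Finset.mul_sum]
      gcongr
      exact sum_inv_sqrt_cube_le L hL n
    _ = _ := by
      have : (n : ℝ) = √n ^ 2 := (Real.sq_sqrt hn0.le).symm
      generalize √(n : ℝ) = s at *
      rw [this]
      field_simp; norm_num

/-! ### The Berry–Esseen theorem -/

/-- The `n`-fold convolution power of `μ`, the law of a sum of `n` independent variables of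
law `μ`. The empty sum has law `dirac 0`. -/
noncomputable def convPow (μ : Measure ℝ) : ℕ → Measure ℝ
  | 0 => Measure.dirac 0
  | n + 1 => convPow μ n ∗ μ

instance convPow_prob (μ : Measure ℝ) [IsProbabilityMeasure μ] (n : ℕ) :
    IsProbabilityMeasure (convPow μ n) := by
  induction n with
  | zero => unfold convPow; infer_instance
  | succ n ih => unfold convPow; infer_instance

lemma measurable_cdf_sub (μ : Measure ℝ) [IsProbabilityMeasure μ] (t : ℝ) :
    Measurable (fun u => μ.real (Iic (t - u))) := by
  have : Antitone (fun u => μ.real (Iic (t - u))) := fun a b h =>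
    measureReal_mono (Iic_subset_Iic.2 (by linarith))
  exact this.measurable

lemma real_Iic_conv (μ ν : Measure ℝ) [IsProbabilityMeasure μ] [IsProbabilityMeasure ν] (t : ℝ) :
    (μ ∗ ν).real (Iic t) = ∫ u, μ.real (Iic (t - u)) ∂ν := by
  rw [Measure.conv_comm, ← integral_indicator_one measurableSet_Iic,
    integral_conv (f := (Iic t).indicator 1)
      ((integrable_const (1 : ℝ)).indicator measurableSet_Iic)]
  refine integral_congr_ae (ae_of_all _ fun u => ?_)
  simp only
  rw [← integral_indicator_one measurableSet_Iic]
  refine integral_congr_ae (ae_of_all _ fun y => ?_)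
  simp only [indicator, mem_Iic, le_sub_iff_add_le', Pi.one_apply]

/-- One Lindeberg swap: replacing one summand of law `μ` by a standard Gaussian one. The remaining `k`
summands are compared with `gaussianReal 0 k`. The difference of distribution functions, at most
`d`, is integrated against `μ ∗ gaussianReal 0 v` and its Gaussian counterpart, which costs
`d / √v ^ 3`. The Gaussian part adds its own variance to the smoothing and costs only
`1 / √(k + v) ^ 3`. -/
lemma lindeberg_step {μ : Measure ℝ} {β β' : ℝ} (hμ : MomentData μ β)
    (hγ : MomentData (gaussianReal 0 1) β') (k : ℕ) {d : ℝ}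
    (hd : ∀ t, |(convPow μ k).real (Iic t) - (gaussianReal 0 k).real (Iic t)| ≤ d)
    (v : ℝ≥0) (hv : v ≠ 0) (t : ℝ) :
    |(convPow μ (k + 1) ∗ gaussianReal 0 v).real (Iic t)
      - (convPow μ k ∗ gaussianReal 0 (v + 1)).real (Iic t)|
      ≤ taylorConst * (β + β') * (d / √v ^ 3 + 1 / √(k + v) ^ 3) := by
  have := hμ.prob
  have e1 : convPow μ (k + 1) ∗ gaussianReal 0 v = convPow μ k ∗ (μ ∗ gaussianReal 0 v) := by
    rw [convPow, Measure.conv_assoc]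
  have e2 : gaussianReal 0 (v + 1) = gaussianReal 0 1 ∗ gaussianReal 0 v := by
    rw [gaussianReal_conv_gaussianReal, add_comm]; simp
  set P := μ ∗ gaussianReal 0 v with hP
  set Q := gaussianReal 0 1 ∗ gaussianReal 0 v with hQ
  have hkv : (k : ℝ≥0) + v ≠ 0 := by positivity
  have e3 : gaussianReal 0 k ∗ P = μ ∗ gaussianReal 0 (k + v) := by
    rw [hP, ← Measure.conv_assoc, Measure.conv_comm _ μ, Measure.conv_assoc,
      gaussianReal_conv_gaussianReal]; simp
  have e4 : gaussianReal 0 k ∗ Q = gaussianReal 0 1 ∗ gaussianReal 0 (k + v) := by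
    rw [hQ, ← Measure.conv_assoc, Measure.conv_comm _ (gaussianReal 0 1), Measure.conv_assoc,
      gaussianReal_conv_gaussianReal]; simp
  rw [e1, e2]
  -- `b1` handles the error in replacing `convPow μ k` by its Gaussian counterpart, `b2` the
  -- swap in the presence of that counterpart
  have b1 := smoothing_tv hμ hγ v hv
    (g := fun u => (convPow μ k).real (Iic (t - u)) - (gaussianReal 0 k).real (Iic (t - u)))
    ((measurable_cdf_sub _ t).sub (measurable_cdf_sub _ t)) (fun u => hd _)
  have b2 := smoothing_tv hμ hγ (k + v) hkv (g := (Iic t).indicator 1)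
    (measurable_one.indicator measurableSet_Iic) (B := 1)
    (fun u => by by_cases h : u ∈ Iic t <;> simp [h])
  rw [integral_indicator_one measurableSet_Iic, integral_indicator_one measurableSet_Iic,
    ← e3, ← e4] at b2
  have bd : ∀ (m : Measure ℝ) [IsProbabilityMeasure m] (M : Measure ℝ) [IsProbabilityMeasure M],
      Integrable (fun u => m.real (Iic (t - u))) M := fun m _ M _ =>
    integrable_of_bdd (measurable_cdf_sub m t) (B := 1) fun u => by
      rw [abs_of_nonneg measureReal_nonneg]; exact measureReal_le_one
  rw [← hP, ← hQ, integral_sub (bd _ _) (bd _ _), integral_sub (bd _ _) (bd _ _),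
    ← real_Iic_conv, ← real_Iic_conv, ← real_Iic_conv, ← real_Iic_conv] at b1
  have h := abs_add_le (((convPow μ k ∗ P).real (Iic t) - (gaussianReal 0 k ∗ P).real (Iic t)) -
    ((convPow μ k ∗ Q).real (Iic t) - (gaussianReal 0 k ∗ Q).real (Iic t)))
    ((gaussianReal 0 k ∗ P).real (Iic t) - (gaussianReal 0 k ∗ Q).real (Iic t))
  rw [show (((convPow μ k ∗ P).real (Iic t) - (gaussianReal 0 k ∗ P).real (Iic t)) -
    ((convPow μ k ∗ Q).real (Iic t) - (gaussianReal 0 k ∗ Q).real (Iic t))) +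
    ((gaussianReal 0 k ∗ P).real (Iic t) - (gaussianReal 0 k ∗ Q).real (Iic t)) =
    (convPow μ k ∗ P).real (Iic t) - (convPow μ k ∗ Q).real (Iic t) by ring] at h
  refine h.trans ((add_le_add b1 b2).trans (le_of_eq ?_))
  push_cast
  ring

/-- Telescoping of `lindeberg_step`: each swap turns one summand into one more unit of smoothing
variance. -/
lemma lindeberg_sum {μ : Measure ℝ} {β β' : ℝ} (hμ : MomentData μ β)
    (hγ : MomentData (gaussianReal 0 1) β') (d : ℕ → ℝ) (n : ℕ)
    (hd : ∀ k < n, ∀ t,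
      |(convPow μ k).real (Iic t) - (gaussianReal 0 k).real (Iic t)| ≤ d k)
    (v : ℝ≥0) (hv : v ≠ 0) (t : ℝ) :
    |(convPow μ n ∗ gaussianReal 0 v).real (Iic t)
        - (gaussianReal 0 n ∗ gaussianReal 0 v).real (Iic t)|
      ≤ ∑ j ∈ Finset.range n, taylorConst * (β + β') *
        (d (n - 1 - j) / √(v + j) ^ 3 + 1 / √((n : ℝ) - 1 + v) ^ 3) := by
  have := hμ.prob
  induction n generalizing v with
  | zero => simp [convPow]
  | succ n ih =>
    have h1 := lindeberg_step hμ hγ n (hd n (by omega)) v hv t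
    have h2 := ih (fun k hk => hd k (by omega)) (v + 1) (by positivity)
    rw [Finset.sum_range_succ']
    have e : gaussianReal 0 ((n + 1 : ℕ) : ℝ≥0) ∗ gaussianReal 0 v
        = gaussianReal 0 n ∗ gaussianReal 0 (v + 1) := by
      rw [gaussianReal_conv_gaussianReal, gaussianReal_conv_gaussianReal]
      congr 1; push_cast; ring
    rw [e]
    refine (abs_sub_le _ _ _).trans ((add_le_add h1 h2).trans (le_of_eq ?_))
    rw [add_comm]
    congr 1
    · refine Finset.sum_congr rfl fun j hj => ?_
      rw [show n + 1 - 1 - (j + 1) = n - 1 - j by omega]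
      push_cast
      rw [show (v : ℝ) + 1 + j = v + (j + 1) by ring,
        show (n : ℝ) - 1 + (v + 1) = n + 1 - 1 + v by ring]
    · push_cast
      simp

/-- Chebyshev's inequality at two standard deviations. -/
lemma gaussian_mass_two_sd (v : ℝ≥0) (hv : v ≠ 0) :
    3 / 4 ≤ (gaussianReal 0 v).real {u | |u| ≤ 2 * √v} := by
  have hs : 0 < √(v : ℝ) := Real.sqrt_pos.2 (by positivity)
  have h := meas_ge_le_variance_div_sq (memLp_id_gaussianReal (μ := 0) (v := v) 2)
    (c := 2 * √v) (by positivity)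
  have e : ENNReal.ofReal (variance id (gaussianReal 0 v) / (2 * √v) ^ 2) = ENNReal.ofReal (1 / 4) := by
    rw [variance_id_gaussianReal, mul_pow, Real.sq_sqrt (by positivity)]
    congr 1
    have : (v : ℝ) ≠ 0 := by exact_mod_cast hv
    field_simp; norm_num
  have hm : (gaussianReal 0 v)[id] = 0 := by simp
  rw [e, hm] at h
  have h' : (gaussianReal 0 v).real {u | 2 * √v ≤ |id u - 0|} ≤ 1 / 4 := by
    rw [measureReal_def]
    exact ENNReal.toReal_le_of_le_ofReal (by norm_num) h
  have hc : (gaussianReal 0 v).real {u | |u| ≤ 2 * √v}ᶜ ≤ 1 / 4 := by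
    refine (measureReal_mono ?_).trans h'
    intro u hu
    simp only [mem_compl_iff, mem_ofPred_eq, not_le] at hu
    simp only [mem_ofPred_eq, id, sub_zero]
    exact hu.le
  rw [measureReal_compl (measurableSet_le (by fun_prop) (by fun_prop)), probReal_univ] at hc
  linarith

/-- If `h` is at least `c` within two standard deviations and at least `-d` elsewhere, its Gaussian
average is at least `3 / 4 * c - d / 4`. -/
lemma unsmoothing_aux (v : ℝ≥0) (hv : v ≠ 0) {h : ℝ → ℝ} (hm : Integrable h (gaussianReal 0 v))
    {c d η : ℝ} (hd : 0 ≤ d) (hη : 0 ≤ η) (hlow : ∀ u, -d ≤ h u)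
    (hc : ∀ u, |u| ≤ 2 * √v → c ≤ h u) (hint : ∫ u, h u ∂(gaussianReal 0 v) ≤ η) :
    c ≤ 4 / 3 * η + d / 3 := by
  by_cases hcd : c ≤ -d
  · linarith
  have hp := gaussian_mass_two_sd v hv
  set A : Set ℝ := {u | |u| ≤ 2 * √v}
  have hA : MeasurableSet A := measurableSet_le (by fun_prop) (by fun_prop)
  have i1 : Integrable (A.indicator fun _ => c + d) (gaussianReal 0 v) :=
    (integrable_const _).indicator hA
  have h1 : ∫ u, (A.indicator (fun _ => c + d) u - d) ∂(gaussianReal 0 v) ≤ η := by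
    refine (integral_mono (i1.sub (integrable_const d)) hm fun u => ?_).trans hint
    by_cases hu : u ∈ A
    · simpa [hu] using hc u hu
    · simpa [hu] using hlow u
  rw [integral_sub i1 (integrable_const d), integral_indicator_const _ hA] at h1
  simp only [smul_eq_mul, integral_const, probReal_univ, one_mul] at h1
  nlinarith

lemma gaussian_real_eq_integral (v : ℝ≥0) (hv : v ≠ 0) (s : Set ℝ) :
    (gaussianReal 0 v).real s = ∫ x in s, gaussianPDFReal 0 v x := by
  rw [measureReal_def, gaussianReal_apply_eq_integral _ hv, ENNReal.toReal_ofReal]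
  exact integral_nonneg fun x => gaussianPDFReal_nonneg _ _ _

lemma gaussian_lipschitz (v : ℝ≥0) (hv : v ≠ 0) (t a : ℝ) (ha : 0 ≤ a) :
    (gaussianReal 0 v).real (Iic (t + a)) ≤ (gaussianReal 0 v).real (Iic t) + a / √v := by
  have hv' : (0 : ℝ) < v := by positivity
  have e : Iic (t + a) = Iic t ∪ Ioc t (t + a) := (Iic_union_Ioc_eq_Iic (by linarith)).symm
  rw [e]
  refine (measureReal_union_le _ _).trans ?_
  gcongr
  rw [gaussian_real_eq_integral v hv]
  have h := norm_setIntegral_le_of_norm_le_const (μ := volume) (s := Ioc t (t + a))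
    (f := gaussianPDFReal 0 v) (C := (√v)⁻¹) (by simp) fun x _ => by
      rw [Real.norm_of_nonneg (gaussianPDFReal_nonneg _ _ _), gaussianPDFReal]
      have h1 : Real.exp (-(x - 0) ^ 2 / (2 * v)) ≤ 1 := by
        rw [Real.exp_le_one_iff]
        have : 0 ≤ (x - 0) ^ 2 / (2 * v) := by positivity
        rw [neg_div]; linarith
      have h2 : √(v : ℝ) ≤ √(2 * Real.pi * v) := by
        apply Real.sqrt_le_sqrt
        nlinarith [Real.pi_gt_three]
      have h3 : 0 < √(v : ℝ) := Real.sqrt_pos.2 hv'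
      calc (√(2 * Real.pi * v))⁻¹ * Real.exp (-(x - 0) ^ 2 / (2 * v))
          ≤ (√(v : ℝ))⁻¹ * 1 := by gcongr
        _ = _ := mul_one _
  refine (le_abs_self _).trans (h.trans (le_of_eq ?_))
  simp [ha, div_eq_inv_mul]

/-- Removal of the smoothing. Let `d` be the supremum of the difference of the two distribution
functions. By monotonicity of one and the Lipschitz bound for the other, a difference at `t`
persists over an interval of length `4 * √v` on one side of `t`, so it is seen by the
smoothed difference. This gives `d ≤ 4 / 3 * η + d / 3 + 4 * √v / √w`. -/
lemma unsmoothing (P : Measure ℝ) [IsProbabilityMeasure P] (w v : ℝ≥0) (hw : w ≠ 0) (hv : v ≠ 0)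
    {η : ℝ} (hη : ∀ t, |(P ∗ gaussianReal 0 v).real (Iic t)
      - (gaussianReal 0 w ∗ gaussianReal 0 v).real (Iic t)| ≤ η) (t : ℝ) :
    |P.real (Iic t) - (gaussianReal 0 w).real (Iic t)| ≤ 2 * η + 6 * (√v / √w) := by
  set F := fun t => P.real (Iic t) with hF
  set G := fun t => (gaussianReal 0 w).real (Iic t) with hG
  have hη0 : 0 ≤ η := (abs_nonneg _).trans (hη 0)
  have hFm : Monotone F := fun a b h => measureReal_mono (Iic_subset_Iic.2 h)
  have hGm : Monotone G := fun a b h => measureReal_mono (Iic_subset_Iic.2 h)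
  have b1 : ∀ t, |F t - G t| ≤ 1 := fun t => by
    have h1 : 0 ≤ F t := measureReal_nonneg
    have h2 : F t ≤ 1 := measureReal_le_one
    have h3 : 0 ≤ G t := measureReal_nonneg
    have h4 : G t ≤ 1 := measureReal_le_one
    rw [abs_le]; constructor <;> linarith
  have hbdd : BddAbove (range fun t => |F t - G t|) := ⟨1, by rintro _ ⟨t, rfl⟩; exact b1 t⟩
  set d := ⨆ t, |F t - G t| with hd
  have hdt : ∀ t, |F t - G t| ≤ d := fun t => le_ciSup hbdd t
  have hd0 : 0 ≤ d := (abs_nonneg _).trans (hdt 0)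
  set s := √(v : ℝ) with hs
  set ℓ := s / √(w : ℝ) with hℓ
  have iD : ∀ t, Integrable (fun u => F (t - u) - G (t - u)) (gaussianReal 0 v) := fun t =>
    integrable_of_bdd ((measurable_cdf_sub P t).sub (measurable_cdf_sub _ t)) fun u => b1 _
  have iF : ∀ (m : Measure ℝ) [IsProbabilityMeasure m] t,
      Integrable (fun u => m.real (Iic (t - u))) (gaussianReal 0 v) := fun m _ t =>
    integrable_of_bdd (measurable_cdf_sub m t) (B := 1) fun u => by
      rw [abs_of_nonneg measureReal_nonneg]; exact measureReal_le_one
  have hint : ∀ t, |∫ u, (F (t - u) - G (t - u)) ∂(gaussianReal 0 v)| ≤ η := fun t => by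
    have := hη t
    rw [real_Iic_conv, real_Iic_conv, ← integral_sub (iF P t) (iF _ t)] at this
    exact this
  have hs0 : 0 ≤ s := Real.sqrt_nonneg _
  have lip : ∀ t, G (t + 4 * s) ≤ G t + 4 * ℓ := fun t => by
    have := gaussian_lipschitz w hw t (4 * s) (by positivity)
    rw [hℓ]; rw [mul_div_assoc] at this; exact this
  have key : ∀ t, |F t - G t| ≤ 4 / 3 * η + d / 3 + 4 * ℓ := fun t => by
    rw [abs_le']
    constructor
    · have := unsmoothing_aux v hv (iD (t + 2 * s)) (c := F t - G t - 4 * ℓ) hd0 hη0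
        (fun u => (abs_le.1 (hdt _)).1) (fun u hu => ?_) (abs_le.1 (hint _)).2
      · linarith
      · have hu' := abs_le.1 hu
        have h1 : F t ≤ F (t + 2 * s - u) := hFm (by linarith)
        have h2 : G (t + 2 * s - u) ≤ G (t + 4 * s) := hGm (by linarith)
        linarith [lip t]
    · have := unsmoothing_aux v hv (iD (t - 2 * s)).neg (c := -(F t - G t) - 4 * ℓ) hd0 hη0
        (fun u => neg_le_neg (abs_le.1 (hdt _)).2) (fun u hu => ?_)
        (by
          simp only [Pi.neg_apply]
          rw [integral_neg]; linarith [(abs_le.1 (hint (t - 2 * s))).1])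
      · linarith
      · have hu' := abs_le.1 hu
        have h1 : F (t - 2 * s - u) ≤ F t := hFm (by linarith)
        have h2 : G (t - 4 * s) ≤ G (t - 2 * s - u) := hGm (by linarith)
        have h3 := lip (t - 4 * s)
        rw [sub_add_cancel] at h3
        simp only [Pi.neg_apply]
        linarith
  have hd2 : d ≤ 4 / 3 * η + d / 3 + 4 * ℓ := ciSup_le key
  have := hdt t
  linarith

/-- The Berry–Esseen theorem, unnormalised, with a non-explicit constant. -/
theorem berry_esseen {μ : Measure ℝ} {β : ℝ} (hμ : MomentData μ β) :
    ∃ C : ℝ, 0 ≤ C ∧ ∀ (n : ℕ) (t : ℝ),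
      |(convPow μ n).real (Iic t) - (gaussianReal 0 n).real (Iic t)| ≤ C / √((n : ℝ) + 1) := by
  have := hμ.prob
  have hγ := gaussian_moments
  set β' := ∫ x, |x| ^ 3 ∂(gaussianReal 0 1) with hβ'
  have hβ0 : 0 ≤ β := le_trans (integral_nonneg fun x => by positivity) hμ.third
  have hβ0' : 0 ≤ β' := integral_nonneg fun x => by positivity
  set K := taylorConst * (β + β') with hK
  have hK0 : 0 ≤ K := mul_nonneg taylorConst_pos.le (by positivity)
  -- the smoothing variance `L` is so large that the recursive term, of order `K * C / √L`,
  -- uses up only a fixed fraction of the constant `C`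
  obtain ⟨L, hL⟩ := exists_nat_ge (max 1 ((60 * K) ^ 2))
  have hL1 : (1 : ℝ) ≤ L := (le_max_left _ _).trans hL
  have hLK : 60 * K ≤ √L := Real.le_sqrt_of_sq_le ((le_max_right _ _).trans hL)
  have hsL : 0 < √(L : ℝ) := Real.sqrt_pos.2 (by linarith)
  have hLne : (L : ℝ≥0) ≠ 0 := by
    have : L ≠ 0 := by rintro rfl; norm_num at hL1
    exact_mod_cast this
  set C := 2 * (3 * K + 9 * √(L : ℝ)) with hC
  have hC0 : 0 ≤ C := by positivity
  refine ⟨C, hC0, fun n => ?_⟩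
  induction n using Nat.strong_induction_on with
  | _ n ih =>
  intro t
  rcases Nat.eq_zero_or_pos n with rfl | hn
  · simp only [convPow, Nat.cast_zero, gaussianReal_zero_var, sub_self, abs_zero]
    positivity
  have hn1 : (1 : ℝ) ≤ n := by exact_mod_cast hn
  have hn0 : (0 : ℝ) < n := by linarith
  have hsn : 0 < √(n : ℝ) := Real.sqrt_pos.2 hn0
  have hη : ∀ t, |(convPow μ n ∗ gaussianReal 0 L).real (Iic t)
      - (gaussianReal 0 n ∗ gaussianReal 0 L).real (Iic t)|
      ≤ K * (1 + 10 * C / √(L : ℝ)) / √n := fun t => by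
    refine (lindeberg_sum hμ hγ (fun k => C / √((k : ℝ) + 1)) n ih L hLne t).trans ?_
    have hsum := sum_split_le n hn L hL1
    calc _ = K * C * ∑ j ∈ Finset.range n, 1 / √((n : ℝ) - j) / √((L : ℝ) + j) ^ 3
          + K * (n * (1 / √((n : ℝ) - 1 + L) ^ 3)) := by
          rw [Finset.mul_sum, ← hK]
          simp only [mul_add, Finset.sum_add_distrib, Finset.sum_const, Finset.card_range,
            nsmul_eq_mul, NNReal.coe_natCast]
          congr 1
          · refine Finset.sum_congr rfl fun j hj => ?_
            have hj' : j < n := Finset.mem_range.1 hj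
            have e : ((n - 1 - j : ℕ) : ℝ) + 1 = n - j := by
              rw [Nat.sub_sub, Nat.cast_sub (by omega)]; push_cast; ring
            rw [e]; ring
          · ring
      _ ≤ K * C * (10 / (√(n : ℝ) * √(L : ℝ))) + K * (1 / √(n : ℝ)) := by
          have h3 : n * (1 / √((n : ℝ) - 1 + L) ^ 3) ≤ 1 / √(n : ℝ) := by
            have e : √(n : ℝ) ≤ √((n : ℝ) - 1 + L) := Real.sqrt_le_sqrt (by linarith)
            have e2 : √(n : ℝ) ^ 2 = n := Real.sq_sqrt hn0.le
            calc n * (1 / √((n : ℝ) - 1 + L) ^ 3) ≤ n * (1 / √(n : ℝ) ^ 3) := by gcongr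
              _ = √(n : ℝ) ^ 2 * (1 / √(n : ℝ) ^ 3) := by rw [e2]
              _ = _ := by field_simp
          gcongr
      _ = _ := by field_simp; ring
  have h := unsmoothing (convPow μ n) n L (by positivity) hLne hη t
  refine h.trans ?_
  have hs2 : √((n : ℝ) + 1) ≤ 3 / 2 * √n := by
    apply Real.sqrt_le_iff.2 ⟨by positivity, ?_⟩
    rw [mul_pow, Real.sq_sqrt hn0.le]; linarith
  have hCL : K * (10 * C / √(L : ℝ)) ≤ C / 6 := by
    rw [mul_div_assoc', div_le_iff₀ hsL]
    nlinarith
  rw [le_div_iff₀ (Real.sqrt_pos.2 (by linarith))]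
  have hX : 0 ≤ 2 * (K * (1 + 10 * C / √(L : ℝ)) / √n) + 6 * (√(L : ℝ) / √n) := by positivity
  calc _ ≤ (2 * (K * (1 + 10 * C / √(L : ℝ)) / √n) + 6 * (√(L : ℝ) / √n)) * (3 / 2 * √n) :=
        mul_le_mul_of_nonneg_left hs2 hX
    _ = 3 * K + 3 * (K * (10 * C / √(L : ℝ))) + 9 * √(L : ℝ) := by field_simp; ring
    _ ≤ C := by linarith

/-! ### The law of the information -/

/-- The law on `ℕ` of the eigenvalue index `Z`, with `P(Z = z) = p z`. It is a probability measure
only when `p` is nonnegative with sum `1`. -/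
noncomputable def pmfMeasure (p : ℕ → ℝ) : Measure ℕ :=
  Measure.count.withDensity (fun z => ENNReal.ofReal (p z))

lemma pmfMeasure_singleton (p : ℕ → ℝ) (z : ℕ) : pmfMeasure p {z} = ENNReal.ofReal (p z) := by
  rw [pmfMeasure, withDensity_apply _ (measurableSet_singleton z), Measure.restrict_singleton]
  simp

lemma pmfMeasure_prob {p : ℕ → ℝ} (hp : ∀ z, 0 ≤ p z) (hp1 : (∑' z, p z) = 1) :
    IsProbabilityMeasure (pmfMeasure p) := by
  constructor
  have hs : Summable p := by
    by_contra h
    rw [tsum_eq_zero_of_not_summable h] at hp1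
    exact zero_ne_one hp1
  rw [pmfMeasure, withDensity_apply _ MeasurableSet.univ, Measure.restrict_univ, lintegral_count,
    ← ENNReal.ofReal_tsum_of_nonneg hp hs, hp1, ENNReal.ofReal_one]

lemma pmfMeasure_integrable {p : ℕ → ℝ} (hp : ∀ z, 0 ≤ p z) {f : ℕ → ℝ}
    (hf : Summable fun z => p z * f z) : Integrable f (pmfMeasure p) := by
  rw [pmfMeasure, integrable_withDensity_iff_integrable_smul' (by fun_prop) (by simp),
    integrable_count_iff]
  simpa [ENNReal.toReal_ofReal (hp _), Real.norm_eq_abs] using hf.abs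

lemma pmfMeasure_integral {p : ℕ → ℝ} (hp : ∀ z, 0 ≤ p z) {f : ℕ → ℝ}
    (hf : Summable fun z => p z * f z) : ∫ z, f z ∂pmfMeasure p = ∑' z, p z * f z := by
  have hi := pmfMeasure_integrable hp hf
  rw [integral_countable hi]
  refine tsum_congr fun z => ?_
  rw [measureReal_def, pmfMeasure_singleton, ENNReal.toReal_ofReal (hp z), smul_eq_mul]

lemma pmfMeasure_pos (p : ℕ → ℝ) : ∀ᵐ z ∂pmfMeasure p, 0 < p z := by
  rw [ae_iff_of_countable]
  intro z hz
  rw [pmfMeasure_singleton] at hz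
  simpa using hz

/-- The standardised information `(-log₂ p(Z) - H) / √V`. -/
noncomputable def stdInfo (p : ℕ → ℝ) (H V : ℝ) (z : ℕ) : ℝ := (-Real.logb 2 (p z) - H) / √V

lemma stdInfo_momentData {p : ℕ → ℝ} (hp : ∀ z, 0 ≤ p z) (hp1 : (∑' z, p z) = 1) {H V : ℝ}
    (hHsum : Summable (fun z => p z * (-Real.logb 2 (p z))))
    (hH : H = ∑' z, p z * (-Real.logb 2 (p z)))
    (hVsum : Summable (fun z => p z * (-Real.logb 2 (p z) - H) ^ 2))
    (hV : V = ∑' z, p z * (-Real.logb 2 (p z) - H) ^ 2) (hVpos : 0 < V)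
    (hT : Summable (fun z => p z * |(-Real.logb 2 (p z) - H)| ^ 3)) :
    ∃ β, MomentData ((pmfMeasure p).map (stdInfo p H V)) β := by
  have hP := pmfMeasure_prob hp hp1
  have hm : Measurable (stdInfo p H V) := by measurability
  have hs : 0 < √V := Real.sqrt_pos.2 hVpos
  have i1 : Integrable (stdInfo p H V) (pmfMeasure p) :=
    ((pmfMeasure_integrable hp hHsum).sub (integrable_const H)).div_const _
  have i2 : Integrable (fun z => stdInfo p H V z ^ 2) (pmfMeasure p) := by
    simpa only [stdInfo, div_pow] using (pmfMeasure_integrable hp hVsum).div_const (√V ^ 2)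
  have i3 : Integrable (fun z => |stdInfo p H V z| ^ 3) (pmfMeasure p) := by
    simpa only [stdInfo, abs_div, div_pow] using
      (pmfMeasure_integrable hp hT).div_const (|√V| ^ 3)
  refine ⟨∫ z, |stdInfo p H V z| ^ 3 ∂pmfMeasure p, ?_⟩
  refine ⟨Measure.isProbabilityMeasure_map hm.aemeasurable, ?_, ?_, ?_, ?_, ?_, ?_⟩
  · exact (integrable_map_measure (by fun_prop) hm.aemeasurable).2 i1
  · exact (integrable_map_measure (by fun_prop) hm.aemeasurable).2 i2
  · exact (integrable_map_measure (by fun_prop) hm.aemeasurable).2 i3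
  · rw [integral_map hm.aemeasurable (by fun_prop)]
    simp only [stdInfo]
    rw [integral_div, integral_sub (pmfMeasure_integrable hp hHsum) (integrable_const H),
      pmfMeasure_integral hp hHsum, ← hH]
    simp
  · rw [integral_map hm.aemeasurable (by fun_prop)]
    simp only [stdInfo, div_pow]
    rw [integral_div, pmfMeasure_integral hp hVsum, ← hV, Real.sq_sqrt hVpos.le,
      div_self hVpos.ne']
  · rw [integral_map hm.aemeasurable (by fun_prop)]

lemma charFun_convPow (μ : Measure ℝ) [IsProbabilityMeasure μ] (n : ℕ) :
    charFun (convPow μ n) = charFun μ ^ n := by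
  induction n with
  | zero => ext t; simp [convPow]
  | succ n ih => ext t; rw [convPow, charFun_conv, ih, pow_succ, Pi.mul_apply]

lemma map_sum_pi_eq_convPow {α : Type*} [MeasurableSpace α] (P : Measure α)
    [IsProbabilityMeasure P] {X : α → ℝ} (hX : Measurable X) (n : ℕ) :
    (Measure.pi fun _ : Fin n => P).map (fun z => ∑ i, X (z i)) = convPow (P.map X) n := by
  have := Measure.isProbabilityMeasure_map (μ := P) hX.aemeasurable
  apply Measure.ext_of_charFun
  have hi : iIndepFun (fun (i : Fin n) (z : Fin n → α) => X (z i))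
      (Measure.pi fun _ : Fin n => P) := iIndepFun_pi (X := fun _ => X) fun _ => hX.aemeasurable
  have hmeas : ∀ i : Fin n, AEMeasurable (fun z : Fin n → α => X (z i))
      (Measure.pi fun _ : Fin n => P) := fun i => (hX.comp (measurable_pi_apply i)).aemeasurable
  rw [hi.charFun_map_fun_sum_eq_prod hmeas, charFun_convPow]
  have h : ∀ i : Fin n, (Measure.pi fun _ : Fin n => P).map (fun z => X (z i)) = P.map X := by
    intro i
    rw [← Function.comp_def X, ← Measure.map_map hX (measurable_pi_apply i),
      (measurePreserving_eval (fun _ : Fin n => P) i).map_eq]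
  simp [h]

/-- The trace in the definition of the spectral inf-entropy is one minus the probability that the
sum of `n` independent standardised informations is below `(ζ - n * H) / √V`. Configurations with
a zero factor `p (z i)` have no mass, which makes the junk value `logb 2 0 = 0` irrelevant. -/
lemma tsum_trace_eq {p : ℕ → ℝ} (hp : ∀ z, 0 ≤ p z) (hp1 : (∑' z, p z) = 1) {H V : ℝ}
    (hVpos : 0 < V) (n : ℕ) (ζ : ℝ) :
    (∑' z : Fin n → ℕ, if (∏ i, p (z i)) ≤ 2 ^ (-ζ) then (∏ i, p (z i)) else 0) =
      1 - (convPow ((pmfMeasure p).map (stdInfo p H V)) n).real (Iio ((ζ - n * H) / √V)) := by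
  have hP := pmfMeasure_prob hp hp1
  have hm : Measurable (stdInfo p H V) := by measurability
  have hs : 0 < √V := Real.sqrt_pos.2 hVpos
  set Q := Measure.pi fun _ : Fin n => pmfMeasure p with hQ
  set A : Set (Fin n → ℕ) := {z | (∏ i, p (z i)) ≤ 2 ^ (-ζ)} with hA
  have hAm : MeasurableSet A := A.to_countable.measurableSet
  have hsing : ∀ z : Fin n → ℕ, Q {z} = ENNReal.ofReal (∏ i, p (z i)) := by
    intro z
    rw [hQ, Measure.pi_singleton, ENNReal.ofReal_prod_of_nonneg fun i _ => hp _]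
    simp [pmfMeasure_singleton]
  have e1 : (∑' z : Fin n → ℕ, if (∏ i, p (z i)) ≤ 2 ^ (-ζ) then (∏ i, p (z i)) else 0) =
      Q.real A := by
    rw [measureReal_def, ← Measure.tsum_indicator_apply_singleton Q A hAm,
      ENNReal.tsum_toReal_eq]
    · refine tsum_congr fun z => ?_
      by_cases hz : (∏ i, p (z i)) ≤ 2 ^ (-ζ)
      · rw [if_pos hz, indicator_of_mem (show z ∈ A from hz), hsing,
          ENNReal.toReal_ofReal (Finset.prod_nonneg fun i _ => hp _)]
      · rw [if_neg hz, indicator_of_notMem (show z ∉ A from hz)]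
        rfl
    · intro z
      by_cases hz : z ∈ A <;> simp [hz]
  have e2 : Q.real Aᶜ =
      (convPow ((pmfMeasure p).map (stdInfo p H V)) n).real (Iio ((ζ - n * H) / √V)) := by
    rw [← map_sum_pi_eq_convPow _ hm, map_measureReal_apply (by fun_prop) measurableSet_Iio]
    apply measureReal_congr
    have hpos : ∀ᵐ z ∂Q, ∀ i, 0 < p (z i) := by
      rw [ae_all_iff]
      intro i
      exact (measurePreserving_eval (fun _ : Fin n => pmfMeasure p) i).quasiMeasurePreserving.ae
        (pmfMeasure_pos p)
    filter_upwards [hpos] with z hz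
    apply propext
    change ¬ ((∏ i, p (z i)) ≤ 2 ^ (-ζ)) ↔ ∑ i, stdInfo p H V (z i) < (ζ - n * H) / √V
    have hprod : 0 < ∏ i, p (z i) := Finset.prod_pos fun i _ => hz i
    have hsum : ∑ i, stdInfo p H V (z i) = (-Real.logb 2 (∏ i, p (z i)) - n * H) / √V := by
      rw [Real.logb_prod _ _ fun i _ => (hz i).ne']
      simp only [stdInfo]
      rw [← Finset.sum_div, Finset.sum_sub_distrib]
      simp
    rw [hsum, div_lt_div_iff_of_pos_right hs, not_le, ← Real.lt_logb_iff_rpow_lt one_lt_two hprod]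
    constructor <;> intro h <;> linarith
  rw [e1, ← e2, probReal_compl_eq_one_sub hAm]
  ring

/-! ### Normal quantiles -/

lemma stdNormalCDF_eq (x : ℝ) : stdNormalCDF x = (gaussianReal 0 1).real (Iic x) := by
  rw [gaussian_real_eq_integral 1 one_ne_zero, stdNormalCDF, ← integral_const_mul]
  simp [gaussianPDFReal]

lemma gaussian_scale (n : ℕ) (hn : 1 ≤ n) (x : ℝ) :
    (gaussianReal 0 n).real (Iic (√n * x)) = stdNormalCDF x := by
  have hs : 0 < √(n : ℝ) := Real.sqrt_pos.2 (by exact_mod_cast hn)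
  have h : (gaussianReal 0 1).map (√(n : ℝ) * ·) = gaussianReal 0 n := by
    rw [gaussianReal_map_const_mul]
    congr 1
    · simp
    · ext
      simp
  rw [stdNormalCDF_eq, ← h, map_measureReal_apply (by fun_prop) measurableSet_Iic]
  congr 1
  ext y
  exact mul_le_mul_iff_right₀ hs

lemma stdNormalCDF_mono : Monotone stdNormalCDF := fun x y h => by
  rw [stdNormalCDF_eq, stdNormalCDF_eq]
  exact measureReal_mono (Iic_subset_Iic.2 h)

lemma stdNormalCDF_continuous : Continuous stdNormalCDF := by
  have : LipschitzWith 1 stdNormalCDF := by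
    refine LipschitzWith.of_le_add fun x y => ?_
    rw [Real.dist_eq]
    have h1 : stdNormalCDF x ≤ stdNormalCDF (y + |x - y|) :=
      stdNormalCDF_mono (by linarith [le_abs_self (x - y)])
    have h2 := gaussian_lipschitz 1 one_ne_zero y |x - y| (abs_nonneg _)
    rw [← stdNormalCDF_eq, ← stdNormalCDF_eq] at h2
    simp only [NNReal.coe_one, Real.sqrt_one, div_one] at h2
    linarith
  exact this.continuous

/-- The normal distribution function grows at least linearly near `a`, since the density is bounded
below on the unit neighbourhood of `a`. -/
lemma stdNormalCDF_growth (a : ℝ) : ∃ m, 0 < m ∧ ∀ x y, a - 1 ≤ x → x ≤ y → y ≤ a + 1 →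
    m * (y - x) ≤ stdNormalCDF y - stdNormalCDF x := by
  refine ⟨gaussianPDFReal 0 1 (|a| + 1), gaussianPDFReal_pos _ _ _ one_ne_zero, ?_⟩
  intro x y h1 h2 h3
  have e : (gaussianReal 0 1).real (Iic y) - (gaussianReal 0 1).real (Iic x)
      = (gaussianReal 0 1).real (Ioc x y) := by
    rw [← Iic_sdiff_Iic, measureReal_sdiff (Iic_subset_Iic.2 h2) measurableSet_Iic]
  rw [stdNormalCDF_eq, stdNormalCDF_eq, e, gaussian_real_eq_integral 1 one_ne_zero]
  have hc : ∫ _ in Ioc x y, gaussianPDFReal 0 1 (|a| + 1) =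
      gaussianPDFReal 0 1 (|a| + 1) * (y - x) := by
    rw [setIntegral_const, Real.volume_real_Ioc_of_le h2, smul_eq_mul, mul_comm]
  rw [← hc]
  refine setIntegral_mono_on (by simp) (integrable_gaussianPDFReal 0 1).integrableOn
    measurableSet_Ioc fun u hu => ?_
  simp only [gaussianPDFReal]
  gcongr ?_ * Real.exp (-?_ / _)
  have : |u| ≤ |a| + 1 := by
    rw [abs_le]
    constructor <;> linarith [hu.1, hu.2, le_abs_self a, neg_abs_le a]
  rw [sub_zero, sub_zero]
  exact sq_le_sq.2 (this.trans (le_abs_self _))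

lemma stdNormalCDF_inv {ε : ℝ} (hε : 0 < ε) (hε1 : ε < 1) :
    stdNormalCDF (stdNormalCDFInv ε) = ε := by
  have hF : stdNormalCDF = cdf (gaussianReal 0 1) := by
    ext x
    rw [stdNormalCDF_eq, cdf_eq_real]
  obtain ⟨b, hb⟩ : ∃ b, stdNormalCDF b < ε := by
    rw [hF]
    exact ((tendsto_cdf_atBot (gaussianReal 0 1)).eventually (gt_mem_nhds hε)).exists
  obtain ⟨c, hc⟩ : ∃ c, ε < stdNormalCDF c := by
    rw [hF]
    exact ((tendsto_cdf_atTop (gaussianReal 0 1)).eventually (lt_mem_nhds hε1)).exists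
  have hne : {a : ℝ | stdNormalCDF a ≤ ε}.Nonempty := ⟨b, hb.le⟩
  have hbdd : BddAbove {a : ℝ | stdNormalCDF a ≤ ε} := by
    refine ⟨c, fun x hx => ?_⟩
    by_contra! h
    exact absurd (stdNormalCDF_mono h.le) (not_le.2 (lt_of_le_of_lt hx hc))
  apply le_antisymm
  · exact (isClosed_le stdNormalCDF_continuous continuous_const).csSup_mem hne hbdd
  · obtain ⟨d, hd⟩ := mem_range_of_exists_le_of_exists_ge stdNormalCDF_continuous
      ⟨b, hb.le⟩ ⟨c, hc.le⟩
    calc ε = stdNormalCDF d := hd.symm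
      _ ≤ _ := stdNormalCDF_mono (le_csSup hbdd hd.le)

/-- Inversion of `berry_esseen`: up to a bounded shift, the `ε`-quantile of the sum of `n` variables is
`√n` times the normal quantile. The open half-line `Iio` is the one met in `tsum_trace_eq`. -/
lemma quantile_expansion {μ : Measure ℝ} {β : ℝ} (hμ : MomentData μ β) {ε : ℝ} (hε : 0 < ε)
    (hε1 : ε < 1) : ∃ M : ℝ, 0 ≤ M ∧ ∃ N : ℕ, ∀ n ≥ N, ∀ y : ℝ,
      (y ≤ √n * stdNormalCDFInv ε - M → (convPow μ n).real (Iio y) ≤ ε) ∧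
      (√n * stdNormalCDFInv ε + M < y → ε < (convPow μ n).real (Iio y)) := by
  have := hμ.prob
  obtain ⟨C, hC, hBE⟩ := berry_esseen hμ
  set a := stdNormalCDFInv ε with ha
  have hΦ : stdNormalCDF a = ε := stdNormalCDF_inv hε hε1
  obtain ⟨m, hm, hgr⟩ := stdNormalCDF_growth a
  -- the shift `M` is chosen so that `m * M` beats the Berry–Esseen constant `C`
  set M := (C + 1) / m with hM
  have hM0 : 0 < M := by positivity
  refine ⟨M, hM0.le, max 1 ⌈M ^ 2⌉₊, fun n hn y => ?_⟩
  have hn1 : 1 ≤ n := (le_max_left _ _).trans hn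
  have hnM : M ^ 2 ≤ n := Nat.ceil_le.1 ((le_max_right _ _).trans hn)
  have hs : 0 < √(n : ℝ) := Real.sqrt_pos.2 (by exact_mod_cast hn1)
  have hMs : M ≤ √n := Real.le_sqrt_of_sq_le hnM
  have hh1 : M / √n ≤ 1 := (div_le_one hs).2 hMs
  have hh0 : 0 < M / √n := by positivity
  have hCn : C / √((n : ℝ) + 1) ≤ C / √n := by gcongr; linarith
  have hmM : m * (M / √n) = C / √n + 1 / √n := by
    rw [hM]; field_simp
  have hone : 0 < 1 / √(n : ℝ) := by positivity
  constructor
  · intro hy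
    have h1 : (convPow μ n).real (Iio y) ≤ (convPow μ n).real (Iic (√n * (a - M / √n))) := by
      refine measureReal_mono fun u hu => ?_
      have : √(n : ℝ) * (a - M / √n) = √n * a - M := by field_simp
      rw [mem_Iic, this]
      exact (le_of_lt hu).trans hy
    have h2 := (abs_le.1 (hBE n (√n * (a - M / √n)))).2
    rw [gaussian_scale n hn1] at h2
    have h3 := hgr (a - M / √n) a (by linarith) (by linarith) (by linarith)
    rw [sub_sub_cancel, hmM, hΦ] at h3
    linarith
  · intro hy
    have h1 : (convPow μ n).real (Iic (√n * (a + M / √n))) ≤ (convPow μ n).real (Iio y) := by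
      refine measureReal_mono fun u hu => ?_
      have : √(n : ℝ) * (a + M / √n) = √n * a + M := by field_simp
      rw [mem_Iic, this] at hu
      exact lt_of_le_of_lt hu hy
    have h2 := (abs_le.1 (hBE n (√n * (a + M / √n)))).1
    rw [gaussian_scale n hn1] at h2
    have h3 := hgr a (a + M / √n) (by linarith) (by linarith) (by linarith)
    rw [add_sub_cancel_left, hmM, hΦ] at h3
    linarith

end Auxiliary

/-- **Second-order expansion of the spectral inf-entropy.**  Let `ρ` be a
density operator on a separable Hilbert space with eigenvalue distribution
`p`, entropy `H = E[−log p(Z)]`, entropy variance `V = Var[−log p(Z)] > 0`,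
and finite third absolute central moment.  The eigenvalues of `ρ^{⊗n}` are
the products `∏ᵢ p(zᵢ)`, so
`H̲_s^ε(ρ^{⊗n}) = sup{ζ : Tr[ρ^{⊗n} Π_ζ] ≥ 1−ε}` is given by the displayed
supremum below, and it satisfies
`H̲_s^ε(ρ^{⊗n}) = n H + √(n V) Φ⁻¹(ε) + O(1)` as `n → ∞`. -/
theorem spectral_inf_entropy_second_order
    (p : ℕ → ℝ) (hp : ∀ z, 0 ≤ p z) (hp1 : (∑' z, p z) = 1)
    (H V : ℝ)
    (hHsum : Summable (fun z => p z * (-Real.logb 2 (p z))))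
    (hH : H = ∑' z, p z * (-Real.logb 2 (p z)))
    (hVsum : Summable (fun z => p z * (-Real.logb 2 (p z) - H) ^ 2))
    (hV : V = ∑' z, p z * (-Real.logb 2 (p z) - H) ^ 2) (hVpos : 0 < V)
    (hT : Summable (fun z => p z * |(-Real.logb 2 (p z) - H)| ^ 3))
    (ε : ℝ) (hε : 0 < ε) (hε1 : ε < 1)
    (Hs : ℕ → ℝ)
    (hHs : ∀ n : ℕ, Hs n = sSup {ζ : ℝ | 1 - ε ≤
      ∑' z : Fin n → ℕ,
        if (∏ i, p (z i)) ≤ 2 ^ (-ζ) then (∏ i, p (z i)) else 0}) :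
    ∃ C : ℝ, 0 ≤ C ∧ ∀ n : ℕ, 1 ≤ n →
      |Hs n - ((n : ℝ) * H + Real.sqrt ((n : ℝ) * V) * stdNormalCDFInv ε)|
        ≤ C := by
  obtain ⟨β, hμ⟩ := stdInfo_momentData hp hp1 hHsum hH hVsum hV hVpos hT
  obtain ⟨M, hM, N, hN⟩ := quantile_expansion hμ hε hε1
  have hs : 0 < √V := Real.sqrt_pos.2 hVpos
  set a := stdNormalCDFInv ε with ha
  -- both bounds on the supremum, which also show that its set is nonempty and bounded above
  have hlarge : ∀ n ≥ N, |Hs n - ((n : ℝ) * H + √((n : ℝ) * V) * a)| ≤ √V * M := by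
    intro n hn
    rw [hHs n]
    simp_rw [tsum_trace_eq (H := H) hp hp1 hVpos n]
    rw [Real.sqrt_mul (Nat.cast_nonneg n)]
    set S := {ζ : ℝ | 1 - ε ≤ 1 - (convPow ((pmfMeasure p).map (stdInfo p H V)) n).real
      (Set.Iio ((ζ - n * H) / √V))} with hS
    have hmem : n * H + √n * √V * a - √V * M ∈ S := by
      have := (hN n hn (((n * H + √n * √V * a - √V * M) - n * H) / √V)).1
        (le_of_eq (by field_simp; ring))
      simp only [hS, Set.mem_ofPred_eq]
      linarith
    have hub : ∀ ζ ∈ S, ζ ≤ n * H + √n * √V * a + √V * M := by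
      intro ζ hζ
      by_contra! h
      have := (hN n hn ((ζ - n * H) / √V)).2 (by rw [lt_div_iff₀ hs]; linarith)
      simp only [hS, Set.mem_ofPred_eq] at hζ
      linarith
    have h1 := le_csSup ⟨_, hub⟩ hmem
    have h2 := csSup_le ⟨_, hmem⟩ hub
    rw [abs_le]
    constructor <;> linarith
  -- the finitely many `n < N` are absorbed into the constant
  set D : ℕ → ℝ := fun n => |Hs n - ((n : ℝ) * H + √((n : ℝ) * V) * a)| with hD
  have hD0 : 0 ≤ ∑ k ∈ Finset.range N, D k := Finset.sum_nonneg fun k _ => abs_nonneg _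
  have hVM : 0 ≤ √V * M := by positivity
  refine ⟨√V * M + ∑ k ∈ Finset.range N, D k, by positivity, fun n _ => ?_⟩
  rcases lt_or_ge n N with h | h
  · have := Finset.single_le_sum (f := D) (fun k _ => abs_nonneg _) (Finset.mem_range.2 h)
    linarith
  · have := hlarge n h
    linarith
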